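/- The thickness of the complete tripartite graph K_{1,10,10} equals 3. -/

import Mathlib

open SimpleGraph

/-- A simple graph is planar if it admits a drawing in the plane: an injective
placement of vertices and, for each edge, an injective continuous arc joining
the images of its endpoints, such that arcs avoid vertex images in their
interiors and distinct arcs meet only at vertex images. -/
def IsPlanar {V : Type*} (G : SimpleGraph V) : Prop :=
  ∃ (f : V → ℝ × ℝ) (γ : G.edgeSet → (Set.Icc (0:ℝ) 1 → ℝ × ℝ)),
    Function.Injective f ∧
    (∀ e : G.edgeSet, Continuous (γ e)) ∧
    (∀ e : G.edgeSet, ∃ u v : V, (e : Sym2 V) = s(u, v) ∧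
      γ e ⟨0, by norm_num⟩ = f u ∧ γ e ⟨1, by norm_num⟩ = f v) ∧
    (∀ e : G.edgeSet, Function.Injective (γ e)) ∧
    (∀ e : G.edgeSet, ∀ t : Set.Icc (0:ℝ) 1, (t : ℝ) ≠ 0 → (t : ℝ) ≠ 1 →
      ∀ v : V, γ e t ≠ f v) ∧
    (∀ e e' : G.edgeSet, e ≠ e' → ∀ s t : Set.Icc (0:ℝ) 1,
      γ e s = γ e' t → γ e s ∈ Set.range f)

/-- The thickness of a graph: the least `n` such that `G` is the union of `n`
planar subgraphs. -/
noncomputable def thickness {V : Type*} (G : SimpleGraph V) : ℕ :=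
  sInf {n : ℕ | ∃ H : Fin n → SimpleGraph V,
    (∀ i, H i ≤ G) ∧ (∀ i, IsPlanar (H i)) ∧ (⨆ i, H i) = G}


section Combi

/-- `K5` minor model, given by a partial colouring with connected colour classes. -/
def HasK5 {V : Type*} (G : SimpleGraph V) : Prop :=
  ∃ c : V → Option (Fin 5),
    (∀ i, ∀ x y, c x = some i → c y = some i →
      Relation.ReflTransGen (fun a b => G.Adj a b ∧ c a = some i ∧ c b = some i) x y) ∧
    (∀ i j, i ≠ j → ∃ x y, c x = some i ∧ c y = some j ∧ G.Adj x y)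

theorem HasK5.mono {V : Type*} {G H : SimpleGraph V} (h : G ≤ H) (hG : HasK5 G) : HasK5 H := by
  obtain ⟨c, h1, h2⟩ := hG
  refine ⟨c, fun i x y hx hy => ?_, fun i j hij => ?_⟩
  · exact Relation.ReflTransGen.mono (fun a b hab => ⟨h hab.1, hab.2⟩) _ _ (h1 i x y hx hy)
  · obtain ⟨x, y, hx, hy, hxy⟩ := h2 i j hij
    exact ⟨x, y, hx, hy, h hxy⟩

/-- contract `v` into `u`; `v` becomes isolated -/
def contr {V : Type*} (G : SimpleGraph V) (u v : V) : SimpleGraph V where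
  Adj x y := x ≠ v ∧ y ≠ v ∧ x ≠ y ∧ (G.Adj x y ∨ (x = u ∧ G.Adj v y) ∨ (y = u ∧ G.Adj v x))
  symm := ⟨by
    rintro x y ⟨h1, h2, h3, h4⟩
    refine ⟨h2, h1, h3.symm, ?_⟩
    rcases h4 with h | h | h
    · exact Or.inl h.symm
    · exact Or.inr (Or.inr h)
    · exact Or.inr (Or.inl h)⟩
  loopless := ⟨fun x h => h.2.2.1 rfl⟩

theorem HasK5.of_contr {V : Type*} {G : SimpleGraph V} {u v : V} (huv : G.Adj u v)
    (h : HasK5 (contr G u v)) : HasK5 G := by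
  classical
  obtain ⟨c, h1, h2⟩ := h
  have hne : u ≠ v := huv.ne
  let c' : V → Option (Fin 5) := fun x => if x = v then c u else c x
  have cv : c' v = c u := by simp [c']
  have cx : ∀ x, x ≠ v → c' x = c x := fun x hx => by simp [c', hx]
  let R : Fin 5 → V → V → Prop := fun i a b => G.Adj a b ∧ c' a = some i ∧ c' b = some i
  have step : ∀ i a b, (contr G u v).Adj a b → c a = some i → c b = some i →
      Relation.ReflTransGen (R i) a b := by
    intro i a b hab ha hb
    obtain ⟨hav, hbv, hab', h⟩ := hab
    rcases h with h | ⟨rfl, h⟩ | ⟨rfl, h⟩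
    · exact Relation.ReflTransGen.single ⟨h, by rw [cx a hav, ha], by rw [cx b hbv, hb]⟩
    · exact (Relation.ReflTransGen.single ⟨huv, by rw [cx _ hav, ha], by rw [cv, ha]⟩).tail
        ⟨h, by rw [cv, ha], by rw [cx b hbv, hb]⟩
    · exact (Relation.ReflTransGen.single ⟨h.symm, by rw [cx _ hav, ha], by rw [cv, hb]⟩).tail
        ⟨huv.symm, by rw [cv, hb], by rw [cx _ hbv, hb]⟩
  have path : ∀ i a b, c a = some i → c b = some i → Relation.ReflTransGen (R i) a b := by
    intro i a b ha hb
    have := h1 i a b ha hb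
    clear ha hb
    induction this with
    | refl => exact .refl
    | tail _ hst ih => exact ih.trans (step i _ _ hst.1 hst.2.1 hst.2.2)
  refine ⟨c', fun i x y hx hy => ?_, fun i j hij => ?_⟩
  · have key : ∀ z, c' z = some i → ∃ z', c z' = some i ∧
        Relation.ReflTransGen (R i) z z' ∧ Relation.ReflTransGen (R i) z' z := by
      intro z hz
      by_cases hzv : z = v
      · subst hzv
        rw [cv] at hz
        exact ⟨u, hz, .single ⟨huv.symm, by rw [cv, hz], by rw [cx _ hne, hz]⟩,
          .single ⟨huv, by rw [cx _ hne, hz], by rw [cv, hz]⟩⟩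
      · exact ⟨z, by rw [← cx z hzv, hz], .refl, .refl⟩
    obtain ⟨x', hx', h3, -⟩ := key x hx
    obtain ⟨y', hy', -, h4⟩ := key y hy
    exact h3.trans ((path i _ _ hx' hy').trans h4)
  · obtain ⟨x, y, hx, hy, hxv, hyv, hxy, h⟩ := h2 i j hij
    rcases h with h | ⟨rfl, h⟩ | ⟨rfl, h⟩
    · exact ⟨x, y, by rw [cx _ hxv, hx], by rw [cx _ hyv, hy], h⟩
    · exact ⟨v, y, by rw [cv, hx], by rw [cx _ hyv, hy], h⟩
    · exact ⟨x, v, by rw [cx _ hxv, hx], by rw [cv, hy], h.symm⟩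

theorem HasK5.of_clique {V : Type*} {G : SimpleGraph V} (w : Fin 5 → V)
    (h : ∀ i j, i < j → G.Adj (w i) (w j)) : HasK5 G := by
  classical
  have h' : ∀ i j, i ≠ j → G.Adj (w i) (w j) := by
    intro i j hij
    rcases lt_or_gt_of_ne hij with h1 | h1
    · exact h i j h1
    · exact (h j i h1).symm
  have hinj : Function.Injective w := by
    intro i j hij
    by_contra hne
    exact (h' i j hne).ne hij
  let c : V → Option (Fin 5) := fun x => if hx : ∃ i, w i = x then some hx.choose else none
  have cw : ∀ i, c (w i) = some i := by
    intro i
    have hx : ∃ k, w k = w i := ⟨i, rfl⟩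
    simp only [c, hx, dite_true]
    exact congrArg some (hinj hx.choose_spec)
  have cw' : ∀ x i, c x = some i → x = w i := by
    intro x i hx
    by_cases he : ∃ k, w k = x
    · obtain ⟨k, rfl⟩ := he
      rw [cw] at hx
      rw [Option.some.inj hx]
    · simp [c, he] at hx
  refine ⟨c, fun i x y hx hy => ?_, fun i j hij => ⟨w i, w j, cw i, cw j, h' i j hij⟩⟩
  rw [cw' x i hx, cw' y i hy]

theorem HasK5.of_clique' {V : Type*} {G : SimpleGraph V} {a b c d e : V}
    (h1 : G.Adj a b) (h2 : G.Adj a c) (h3 : G.Adj a d) (h4 : G.Adj a e) (h5 : G.Adj b c)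
    (h6 : G.Adj b d) (h7 : G.Adj b e) (h8 : G.Adj c d) (h9 : G.Adj c e) (h10 : G.Adj d e) :
    HasK5 G := by
  refine HasK5.of_clique ![a, b, c, d, e] ?_
  intro i j hij
  fin_cases i <;> fin_cases j <;> first | exact absurd hij (by decide) | simpa

theorem core5 {V : Type*} {G : SimpleGraph V} {v a b c d e : V}
    (hab : a ≠ b) (hcd : c ≠ d)
    (va : G.Adj v a) (vb : G.Adj v b) (vc : G.Adj v c) (vd : G.Adj v d) (ve : G.Adj v e)
    (ac : G.Adj a c) (ad : G.Adj a d) (ae : G.Adj a e) (bc : G.Adj b c) (bd : G.Adj b d)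
    (be : G.Adj b e) (ce : G.Adj c e) (de : G.Adj d e) : HasK5 G := by
  refine HasK5.of_contr (u := c) (v := a) ac.symm ?_
  have := va.ne; have := ac.ne; have := ad.ne; have := ae.ne
  have := vc.ne; have := vb.ne; have := vd.ne; have := ve.ne
  have := bc.ne; have := bd.ne; have := be.ne; have := ce.ne; have := de.ne
  refine HasK5.of_clique' (a := v) (b := e) (c := c) (d := b) (e := d) ?_ ?_ ?_ ?_ ?_ ?_ ?_ ?_ ?_ ?_ <;>
  · refine ⟨?_, ?_, ?_, ?_⟩ <;> first | (intro h; simp_all) | (simp_all [SimpleGraph.adj_comm])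

open scoped Classical in
theorem card_contr {V : Type*} [Fintype V] {G : SimpleGraph V} {u v : V} (huv : G.Adj u v) :
    G.edgeFinset.card ≤ (contr G u v).edgeFinset.card + 1 +
      (G.neighborFinset u ∩ G.neighborFinset v).card := by
  set A := G.edgeFinset \ G.incidenceFinset v
  set N := (G.neighborFinset v \ G.neighborFinset u).erase u
  set B := N.image (fun y => s(u, y))
  have hA : A ∪ B ⊆ (contr G u v).edgeFinset := by
    intro e he
    induction e using Sym2.ind with
    | _ x y =>
    simp only [A, B, N, Finset.mem_union, Finset.mem_sdiff, Finset.mem_image, Finset.mem_erase,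
      mem_neighborFinset, mem_incidenceFinset, mem_edgeFinset, mem_edgeSet] at he ⊢
    rcases he with ⟨h1, h2⟩ | ⟨z, ⟨hz, hvz, huz⟩, he⟩
    · refine ⟨?_, ?_, h1.ne, Or.inl h1⟩
      · rintro rfl
        exact h2 ⟨h1, by simp⟩
      · rintro rfl
        exact h2 ⟨h1, by simp⟩
    · have : (contr G u v).Adj u z := ⟨huv.ne, hvz.ne', hz.symm, Or.inr (Or.inl ⟨rfl, hvz⟩)⟩
      rw [← mem_edgeSet, ← he]
      exact this
  have hd : Disjoint A B := by
    rw [Finset.disjoint_left]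
    intro e he1 he2
    simp only [A, B, N, Finset.mem_sdiff, Finset.mem_image, Finset.mem_erase,
      mem_neighborFinset, mem_edgeFinset] at he1 he2
    obtain ⟨z, ⟨hz, hvz, huz⟩, rfl⟩ := he2
    exact huz he1.1
  have hBc : B.card = N.card := by
    apply Finset.card_image_of_injective
    intro x y h
    exact Sym2.congr_right.1 h
  have hsub : G.incidenceFinset v ⊆ G.edgeFinset := G.incidenceFinset_subset v
  have hAc : A.card + G.degree v = G.edgeFinset.card := by
    rw [← G.card_incidenceFinset_eq_degree v]
    exact Finset.card_sdiff_add_card_eq_card hsub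
  have hu : u ∈ G.neighborFinset v \ G.neighborFinset u := by
    simp [huv.symm]
  have hNc : N.card + 1 = (G.neighborFinset v \ G.neighborFinset u).card :=
    Finset.card_erase_add_one hu
  have h3 := Finset.card_sdiff_add_card_inter (G.neighborFinset v) (G.neighborFinset u)
  rw [card_neighborFinset_eq_degree, Finset.inter_comm] at h3
  have h4 := Finset.card_le_card hA
  rw [Finset.card_union_of_disjoint hd] at h4
  omega

open scoped Classical in
theorem mader {V : Type*} [Fintype V] : ∀ (n : ℕ) (G : SimpleGraph V) (S : Finset V), S.card = n →
    2 ≤ n → (∀ x y, G.Adj x y → x ∈ S) → 3 * n ≤ G.edgeFinset.card + 3 → HasK5 G := by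
  intro n
  induction n with
  | zero => intro G S _ h; omega
  | succ n ih =>
  intro G₀ S hS hn hG₀ he₀
  -- reduce to exact number of edges
  obtain ⟨T, hT, hTc⟩ := Finset.exists_subset_card_eq
    (show 3 * (n + 1) - 3 ≤ G₀.edgeFinset.card by omega)
  obtain ⟨G, hGG, he⟩ : ∃ G : SimpleGraph V, G ≤ G₀ ∧ G.edgeFinset.card = 3 * n := by
    refine ⟨fromEdgeSet (T : Set (Sym2 V)), ?_, ?_⟩
    · rw [← fromEdgeSet_edgeSet G₀]
      apply fromEdgeSet_mono
      intro e h
      exact mem_edgeFinset.1 (hT h)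
    · have : ∀ H : SimpleGraph V, H = fromEdgeSet (T : Set (Sym2 V)) → H.edgeFinset = T := by
        intro H hH
        ext e
        rw [mem_edgeFinset, hH, edgeSet_fromEdgeSet]
        constructor
        · exact fun h => h.1
        · exact fun h => ⟨h, G₀.not_isDiag_of_mem_edgeSet (mem_edgeFinset.1 (hT h))⟩
      rw [this _ rfl, hTc]; omega
  refine HasK5.mono hGG ?_
  have hG : ∀ x y, G.Adj x y → x ∈ S := fun x y h => hG₀ x y (hGG h)
  have hsum : ∑ x ∈ S, G.degree x = 2 * (3 * n) := by
    rw [← he, ← G.sum_degrees_eq_twice_card_edges]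
    apply Finset.sum_subset (Finset.subset_univ _)
    intro x _ hx
    rw [← card_neighborFinset_eq_degree, Finset.card_eq_zero, Finset.eq_empty_iff_forall_notMem]
    intro y hy
    exact hx (hG x y ((G.mem_neighborFinset x y).1 hy))
  have hdeg : ∀ x ∈ S, G.degree x ≤ n := by
    intro x hx
    rw [← card_neighborFinset_eq_degree]
    have : G.neighborFinset x ⊆ S.erase x := by
      intro y hy
      rw [mem_neighborFinset] at hy
      exact Finset.mem_erase.2 ⟨hy.ne', hG y x hy.symm⟩
    have := Finset.card_le_card this
    rw [Finset.card_erase_of_mem hx] at this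
    omega
  have hn6 : 6 ≤ n + 1 := by
    have := Finset.sum_le_card_nsmul S _ n hdeg
    rw [hsum, hS, smul_eq_mul] at this
    nlinarith
  obtain ⟨v, hv, hv5⟩ : ∃ v ∈ S, G.degree v ≤ 5 := by
    by_contra! hcon
    have := Finset.card_nsmul_le_sum S (fun x => G.degree x) 6 (fun x hx => hcon x hx)
    rw [hsum, hS, smul_eq_mul] at this
    omega
  have hSe : (S.erase v).card = n := by rw [Finset.card_erase_of_mem hv]; omega
  by_cases hv3 : G.degree v ≤ 3
  · have hle : G.deleteEdges (G.incidenceSet v) ≤ G := deleteEdges_le _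
    refine HasK5.mono hle (ih _ (S.erase v) hSe (by omega) ?_ ?_)
    · intro x y hxy
      rw [deleteEdges_adj] at hxy
      refine Finset.mem_erase.2 ⟨?_, hG x y hxy.1⟩
      rintro rfl
      exact hxy.2 ⟨hxy.1, by simp⟩
    · have : ∀ H : SimpleGraph V, H = G.deleteEdges (G.incidenceSet v) →
          H.edgeFinset = G.edgeFinset \ G.incidenceFinset v := by
        intro H hH
        ext e
        simp [hH, edgeSet_deleteEdges]
      rw [this _ rfl]
      have h2 := Finset.card_sdiff_add_card_eq_card (G.incidenceFinset_subset v)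
      rw [G.card_incidenceFinset_eq_degree v] at h2
      omega
  by_cases ht : ∃ u, G.Adj u v ∧ (G.neighborFinset u ∩ G.neighborFinset v).card ≤ 2
  · obtain ⟨u, huv, ht⟩ := ht
    have hcc := card_contr huv
    refine HasK5.of_contr huv (ih _ (S.erase v) hSe (by omega) ?_ (by omega))
    rintro x y ⟨hxv, hyv, hxy, h⟩
    refine Finset.mem_erase.2 ⟨hxv, ?_⟩
    rcases h with h | ⟨rfl, h⟩ | ⟨rfl, h⟩
    · exact hG _ _ h
    · exact hG _ _ huv
    · exact hG _ _ h.symm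
  push Not at ht
  set N := G.neighborFinset v with hN
  have hNc : N.card = G.degree v := card_neighborFinset_eq_degree _ _
  have hNa : ∀ x, x ∈ N ↔ G.Adj v x := fun x => by rw [hN, mem_neighborFinset]
  have star : ∀ u x, ∀ X : Finset V, G.Adj v u → G.Adj v x → u ∈ X → x ∈ X → X ⊆ N →
      N.card ≤ X.card + 2 → ∃ z ∈ X, G.Adj u z := by
    intro u x X hu hx huX hxX hXN hc
    by_contra! hcon
    have hs : G.neighborFinset u ∩ N ⊆ N \ X := by
      intro z hz
      rw [Finset.mem_inter, mem_neighborFinset] at hz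
      exact Finset.mem_sdiff.2 ⟨hz.2, fun h => hcon z h hz.1⟩
    have h1 := Finset.card_le_card hs
    rw [Finset.card_sdiff_of_subset hXN] at h1
    have h2 := ht u hu.symm
    have h3 := Finset.card_le_card hXN
    omega
  by_cases h4 : G.degree v = 4
  · have adj : ∀ x y, G.Adj v x → G.Adj v y → x ≠ y → G.Adj x y := by
      intro x y hx hy hxy
      obtain ⟨z, hz, h⟩ := star x y {x, y} hx hy (by simp) (by simp)
        (by intro z hz; rw [hNa]; simp at hz; rcases hz with rfl | rfl <;> assumption)
        (by rw [hNc, h4, Finset.card_pair hxy])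
      simp at hz
      rcases hz with rfl | rfl
      · exact absurd h (G.irrefl)
      · exact h
    obtain ⟨a, N', ha, hN', hc'⟩ := Finset.card_eq_succ.1 (hNc.trans h4)
    obtain ⟨b, c, d, hbc, hbd, hcd, rfl⟩ := Finset.card_eq_three.1 hc'
    have hm : ∀ x ∈ insert a ({b, c, d} : Finset V), G.Adj v x := by
      intro x hx; rw [hN'] at hx; exact (hNa x).1 hx
    simp only [Finset.mem_insert, Finset.mem_singleton, not_or, forall_eq_or_imp, forall_eq] at hm ha
    obtain ⟨va, vb, vc, vd⟩ := hm
    exact HasK5.of_clique' va vb vc vd (adj _ _ va vb ha.1) (adj _ _ va vc ha.2.1)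
      (adj _ _ va vd ha.2.2) (adj _ _ vb vc hbc) (adj _ _ vb vd hbd) (adj _ _ vc vd hcd)
  · have h5 : N.card = 5 := by omega
    have adj : ∀ u x y, G.Adj v u → G.Adj v x → G.Adj v y → u ≠ x → u ≠ y → x ≠ y →
        ¬ G.Adj u x → G.Adj u y := by
      intro u x y hu hx hy hux huy hxy hnot
      obtain ⟨z, hz, h⟩ := star u x {u, x, y} hu hx (by simp) (by simp)
        (by intro z hz; rw [hNa]; simp at hz; rcases hz with rfl | rfl | rfl <;> assumption)
        (by rw [h5, Finset.card_eq_three.2 ⟨u, x, y, hux, huy, hxy, rfl⟩])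
      simp at hz
      rcases hz with rfl | rfl | rfl
      · exact absurd h (G.irrefl)
      · exact absurd h hnot
      · exact h
    obtain ⟨a, b, va, vb, hab, hA⟩ : ∃ a b, G.Adj v a ∧ G.Adj v b ∧ a ≠ b ∧
        ∀ x, G.Adj v x → x ≠ a → x ≠ b → G.Adj a x ∧ G.Adj b x := by
      by_cases hex : ∃ a b, G.Adj v a ∧ G.Adj v b ∧ a ≠ b ∧ ¬ G.Adj a b
      · obtain ⟨a, b, va, vb, hab, hn⟩ := hex
        refine ⟨a, b, va, vb, hab, fun x vx hxa hxb => ⟨?_, ?_⟩⟩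
        · exact adj a b x va vb vx hab hxa.symm hxb.symm hn
        · exact adj b a x vb va vx hab.symm hxb.symm hxa.symm (fun h => hn h.symm)
      · push Not at hex
        obtain ⟨a, ha, b, hb, hab⟩ := Finset.one_lt_card.1 (show 1 < N.card by omega)
        rw [hNa] at ha hb
        exact ⟨a, b, ha, hb, hab, fun x vx hxa hxb =>
          ⟨hex _ _ ha vx hxa.symm, hex _ _ hb vx hxb.symm⟩⟩
    have hc3 : ((N.erase a).erase b).card = 3 := by
      rw [Finset.card_erase_of_mem, Finset.card_erase_of_mem, h5]
      · exact (hNa a).2 va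
      · exact Finset.mem_erase.2 ⟨hab.symm, (hNa b).2 vb⟩
    obtain ⟨c, d, e, hcd, hce, hde, hN3⟩ := Finset.card_eq_three.1 hc3
    have hm : ∀ x ∈ ({c, d, e} : Finset V), G.Adj v x ∧ G.Adj a x ∧ G.Adj b x := by
      intro x hx
      rw [← hN3, Finset.mem_erase, Finset.mem_erase, hNa] at hx
      exact ⟨hx.2.2, hA x hx.2.2 hx.2.1 hx.1⟩
    simp only [Finset.mem_insert, Finset.mem_singleton, forall_eq_or_imp, forall_eq] at hm
    obtain ⟨⟨vc, ac, bc⟩, ⟨vd, ad, bd⟩, ⟨ve, ae, be⟩⟩ := hm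
    by_cases h1 : G.Adj c e
    · by_cases h2 : G.Adj d e
      · exact core5 hab hcd va vb vc vd ve ac ad ae bc bd be h1 h2
      · exact core5 hab hde va vb vd ve vc ad ae ac bd be bc
          (adj d e c vd ve vc hde hcd.symm hce.symm h2) h1.symm
    · exact core5 hab hce va vb vc ve vd ac ae ad bc be bd
        (adj c e d vc ve vd hce hcd hde.symm h1)
        (adj e c d ve vc vd hce.symm hde.symm hcd (fun h => h1 h.symm))

end Combi

section Topo
open Complex

theorem lift_sq {X : Type*} [TopologicalSpace X] [SimplyConnectedSpace X]
    [LocallyPathConnectedSpace X] (g : X → ℂ) (hg : Continuous g) (h0 : ∀ x, g x ≠ 0) :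
    ∃ f : X → ℂ, Continuous f ∧ ∀ x, exp (f x) = g x := by
  obtain ⟨x₀⟩ : Nonempty X := inferInstance
  rcases isCoveringMapOn_exp.existsUnique_continuousMap_lifts
    ⟨g, hg⟩ (exp_log (h0 x₀)) (fun x => h0 x) with ⟨f, ⟨-, hf⟩, -⟩
  exact ⟨f, f.continuous, fun x => congrFun hf x⟩

theorem lift_unique (f g : unitInterval → ℂ) (hf : Continuous f) (hg : Continuous g)
    (k : ℂ) (h : ∀ x, exp (f x) = k * exp (g x)) : f 1 - f 0 = g 1 - g 0 := by
  have hk : k ≠ 0 := by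
    rintro rfl
    have := h 0
    simp at this
  have hc : Continuous (fun x => f x - g x) := hf.sub hg
  have he : ∀ x, exp (f x - g x) = k := by
    intro x
    rw [exp_sub, h]
    field_simp [exp_ne_zero]
  have : ∀ x, f x - g x = f 0 - g 0 := by
    have := isCoveringMap_exp.const_of_comp (g := fun x => f x - g x) hc (fun a a' => by
      apply Subtype.ext
      simp [he])
    intro x
    exact this x 0
  linear_combination this 1

theorem lift_I (g : unitInterval → ℂ) (hg : Continuous g) (h0 : ∀ x, g x ≠ 0) :
    ∃ f : unitInterval → ℂ, Continuous f ∧ ∀ x, exp (f x) = g x := by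
  obtain ⟨f, hf, he⟩ := lift_sq (fun x : ℝ => g (Set.projIcc 0 1 zero_le_one x))
    (hg.comp continuous_projIcc) (fun x => h0 _)
  refine ⟨fun x => f x, hf.comp continuous_subtype_val, fun x => ?_⟩
  rw [he, Set.projIcc_val]

theorem lift_II (g : unitInterval × unitInterval → ℂ) (hg : Continuous g) (h0 : ∀ x, g x ≠ 0) :
    ∃ f : unitInterval × unitInterval → ℂ, Continuous f ∧ ∀ x, exp (f x) = g x := by
  obtain ⟨f, hf, he⟩ := lift_sq (fun x : ℝ × ℝ => g (Set.projIcc 0 1 zero_le_one x.1,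
    Set.projIcc 0 1 zero_le_one x.2))
    (hg.comp ((continuous_projIcc.comp continuous_fst).prodMk
      (continuous_projIcc.comp continuous_snd))) (fun x => h0 _)
  refine ⟨fun x => f (x.1, x.2), hf.comp (by fun_prop), fun x => ?_⟩
  rw [he, Set.projIcc_val, Set.projIcc_val]

theorem no_K5 (p : Fin 5 → ℂ) (γ : Fin 5 → Fin 5 → unitInterval → ℂ)
    (hc : ∀ i j, i < j → Continuous (γ i j))
    (h0 : ∀ i j, i < j → γ i j 0 = p i) (h1 : ∀ i j, i < j → γ i j 1 = p j)
    (hd : ∀ i j k l, i < j → k < l → i ≠ k → i ≠ l → j ≠ k → j ≠ l →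
      ∀ s t, γ i j s ≠ γ k l t) : False := by
  have hdv : ∀ i j v, i < j → i ≠ v → j ≠ v → ∀ s, γ i j s - p v ≠ 0 := by
    intro i j v hij hiv hjv s
    rw [sub_ne_zero]
    obtain ⟨w, hw1, hw2, hw3⟩ : ∃ w : Fin 5, w ≠ i ∧ w ≠ j ∧ w ≠ v := by
      revert i j v; decide
    rcases lt_or_gt_of_ne hw3 with h | h
    · rw [← h1 w v h]
      exact hd i j w v hij h hw1.symm hiv hw2.symm hjv s 1
    · rw [← h0 v w h]
      exact hd i j v w hij h hiv hw1.symm hjv hw2.symm s 0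
  have hp : ∀ v w, v < w → p w - p v ≠ 0 := by
    intro v w hvw
    obtain ⟨u, hu1, hu2⟩ : ∃ u : Fin 5, u ≠ v ∧ u ≠ w := by
      revert v w; decide
    rcases lt_or_gt_of_ne hu2 with h | h
    · have := hdv u w v h hu1 hvw.ne' 1
      rwa [h1 u w h] at this
    · have := hdv w u v h hvw.ne' hu1 0
      rwa [h0 w u h] at this
  have hφ : ∀ i j v, ∃ f : unitInterval → ℂ, i < j → i ≠ v → j ≠ v → 
      (Continuous f ∧ ∀ s, exp (f s) = γ i j s - p v) := by
    intro i j v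
    by_cases h : i < j ∧ i ≠ v ∧ j ≠ v
    · obtain ⟨f, hf⟩ := lift_I (fun s => γ i j s - p v) ((hc i j h.1).sub continuous_const)
        (hdv i j v h.1 h.2.1 h.2.2)
      exact ⟨f, fun _ _ _ => hf⟩
    · exact ⟨0, fun a b c => absurd ⟨a, b, c⟩ h⟩
  choose φ hφ using hφ
  let α : Fin 5 → Fin 5 → Fin 5 → ℂ := fun i j v => φ i j v 1 - φ i j v 0
  have hsq : ∀ i j k l, i < j → k < l → i ≠ k → i ≠ l → j ≠ k → j ≠ l →
      α i j k + α k l j = α k l i + α i j l := by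
    intro i j k l hij hkl hik hil hjk hjl
    obtain ⟨Λ, hΛ, hΛe⟩ := lift_II (fun x : unitInterval × unitInterval => γ i j x.1 - γ k l x.2)
      (((hc i j hij).comp continuous_fst).sub ((hc k l hkl).comp continuous_snd))
      (fun x => sub_ne_zero.2 (hd i j k l hij hkl hik hil hjk hjl x.1 x.2))
    have e1 := lift_unique (fun s => Λ (s, 0)) (φ i j k) (hΛ.comp (by fun_prop))
      (hφ i j k hij hik hjk).1 1 (fun s => by
        rw [hΛe, (hφ i j k hij hik hjk).2, h0 k l hkl, one_mul])
    have e2 := lift_unique (fun s => Λ (s, 1)) (φ i j l) (hΛ.comp (by fun_prop))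
      (hφ i j l hij hil hjl).1 1 (fun s => by
        rw [hΛe, (hφ i j l hij hil hjl).2, h1 k l hkl, one_mul])
    have e3 := lift_unique (fun s => Λ (0, s)) (φ k l i) (hΛ.comp (by fun_prop))
      (hφ k l i hkl hik.symm hil.symm).1 (-1) (fun s => by
        rw [hΛe, (hφ k l i hkl hik.symm hil.symm).2, h0 i j hij]; ring)
    have e4 := lift_unique (fun s => Λ (1, s)) (φ k l j) (hΛ.comp (by fun_prop))
      (hφ k l j hkl hjk.symm hjl.symm).1 (-1) (fun s => by
        rw [hΛe, (hφ k l j hkl hjk.symm hjl.symm).2, h1 i j hij]; ring)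
    simp only [α]
    linear_combination -e1 + e2 + e3 - e4
  let θ : Fin 5 → Fin 5 → ℂ := fun v w =>
    if v < w then log (p w - p v) else log (p v - p w) + Real.pi * I
  have hθe : ∀ v w, v ≠ w → exp (θ v w) = p w - p v := by
    intro v w hvw
    simp only [θ]
    split_ifs with h
    · exact exp_log (hp v w h)
    · rw [exp_add, exp_log (hp w v (lt_of_le_of_ne (not_lt.1 h) hvw.symm)), exp_pi_mul_I]; ring
  have hθ : ∀ v w, v < w → θ w v = θ v w + Real.pi * I := by
    intro v w hvw
    simp [θ, hvw, not_lt.2 hvw.le]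
  have hn : ∀ i j v, ∃ n : ℤ, i < j → i ≠ v → j ≠ v → 
      α i j v = θ v j - θ v i + n * (2 * Real.pi * I) := by
    intro i j v
    by_cases h : i < j ∧ i ≠ v ∧ j ≠ v
    · have : exp (α i j v) = exp (θ v j - θ v i) := by
        rw [exp_sub, exp_sub, (hφ i j v h.1 h.2.1 h.2.2).2, (hφ i j v h.1 h.2.1 h.2.2).2,
          hθe _ _ h.2.1.symm, hθe _ _ h.2.2.symm, h0 i j h.1, h1 i j h.1]
      obtain ⟨n, hn⟩ := exp_eq_exp_iff_exists_int.1 this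
      exact ⟨n, fun _ _ _ => hn⟩
    · exact ⟨0, fun a b c => absurd ⟨a, b, c⟩ h⟩
  choose n hn using hn
  have hpi : (Real.pi : ℂ) * I ≠ 0 := by
    simp [Real.pi_ne_zero]
  let δ : Fin 5 → Fin 5 → ℤ := fun v w => if v < w then -1 else 1
  have hδ : ∀ v w, v ≠ w → θ v w - θ w v = δ v w * (Real.pi * I) := by
    intro v w hvw
    simp only [δ]
    split_ifs with h
    · rw [hθ v w h]; push_cast; ring
    · rw [hθ w v (lt_of_le_of_ne (not_lt.1 h) hvw.symm)]; push_cast; ring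
  have main : ∀ i j k l, i < j → k < l → i ≠ k → i ≠ l → j ≠ k → j ≠ l →
      2 * (n i j k + n k l j - n k l i - n i j l) + (δ k j + δ i k + δ j l + δ l i) = 0 := by
    intro i j k l hij hkl hik hil hjk hjl
    have h := hsq i j k l hij hkl hik hil hjk hjl
    rw [hn i j k hij hik hjk, hn k l j hkl hjk.symm hjl.symm, hn k l i hkl hik.symm hil.symm,
      hn i j l hij hil hjl] at h
    have d1 := hδ k j hjk.symm
    have d2 := hδ i k hik
    have d3 := hδ j l hjl
    have d4 := hδ l i hil.symm
    have : ((2 * (n i j k + n k l j - n k l i - n i j l) + (δ k j + δ i k + δ j l + δ l i) : ℤ) : ℂ)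
        * (Real.pi * I) = 0 := by
      push_cast
      linear_combination h - d1 - d2 - d3 - d4
    rcases mul_eq_zero.1 this with h | h
    · exact_mod_cast h
    · exact absurd h hpi
  have m1 := main 0 1 2 3 (by decide) (by decide) (by decide) (by decide) (by decide) (by decide)
  have m2 := main 0 2 1 3 (by decide) (by decide) (by decide) (by decide) (by decide) (by decide)
  have m3 := main 0 3 1 2 (by decide) (by decide) (by decide) (by decide) (by decide) (by decide)
  have m4 := main 0 1 2 4 (by decide) (by decide) (by decide) (by decide) (by decide) (by decide)
  have m5 := main 0 2 1 4 (by decide) (by decide) (by decide) (by decide) (by decide) (by decide)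
  have m6 := main 0 4 1 2 (by decide) (by decide) (by decide) (by decide) (by decide) (by decide)
  have m7 := main 0 1 3 4 (by decide) (by decide) (by decide) (by decide) (by decide) (by decide)
  have m8 := main 0 3 1 4 (by decide) (by decide) (by decide) (by decide) (by decide) (by decide)
  have m9 := main 0 4 1 3 (by decide) (by decide) (by decide) (by decide) (by decide) (by decide)
  have m10 := main 0 2 3 4 (by decide) (by decide) (by decide) (by decide) (by decide) (by decide)
  have m11 := main 0 3 2 4 (by decide) (by decide) (by decide) (by decide) (by decide) (by decide)
  have m12 := main 0 4 2 3 (by decide) (by decide) (by decide) (by decide) (by decide) (by decide)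
  have m13 := main 1 2 3 4 (by decide) (by decide) (by decide) (by decide) (by decide) (by decide)
  have m14 := main 1 3 2 4 (by decide) (by decide) (by decide) (by decide) (by decide) (by decide)
  have m15 := main 1 4 2 3 (by decide) (by decide) (by decide) (by decide) (by decide) (by decide)
  simp [δ] at m1 m2 m3 m4 m5 m6 m7 m8 m9 m10 m11 m12 m13 m14 m15
  omega

end Topo

section Plan

theorem planar_no_K5 {V : Type*} {G : SimpleGraph V} (hP : IsPlanar G) (hK : HasK5 G) : False := by
  obtain ⟨f, γ, hf, hγc, hends, -, hint, hcross⟩ := hP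
  obtain ⟨c, h1, h2⟩ := hK
  let X : Set V → Set (ℝ × ℝ) := fun W => {z | ∃ v, v ∈ W ∧ f v = z} ∪
    {z | ∃ (e : G.edgeSet) (t : Set.Icc (0:ℝ) 1), (∀ v ∈ (e : Sym2 V), v ∈ W) ∧ γ e t = z}
  have hvert : ∀ (e : G.edgeSet) (t : Set.Icc (0:ℝ) 1) (v : V), γ e t = f v →
      v ∈ (e : Sym2 V) := by
    intro e t v h
    obtain ⟨a, b, hab, ha, hb⟩ := hends e
    by_cases t0 : (t : ℝ) = 0
    · have : t = ⟨0, by norm_num⟩ := Subtype.ext t0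
      rw [this, ha] at h
      rw [hab, ← hf h]; simp
    by_cases t1 : (t : ℝ) = 1
    · have : t = ⟨1, by norm_num⟩ := Subtype.ext t1
      rw [this, hb] at h
      rw [hab, ← hf h]; simp
    · exact absurd h (hint e t t0 t1 v)
  have hedge : ∀ W u v, u ∈ W → v ∈ W → G.Adj u v → JoinedIn (X W) (f u) (f v) := by
    intro W u v hu hv huv
    obtain ⟨a, b, hab, ha, hb⟩ := hends ⟨s(u, v), huv⟩
    have key : JoinedIn (X W) (f a) (f b) := by
      refine ⟨⟨⟨γ ⟨s(u, v), huv⟩, hγc _⟩, ha, hb⟩, fun t => Or.inr ⟨_, t, ?_, rfl⟩⟩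
      intro w hw
      rcases Sym2.mem_iff.1 hw with rfl | rfl <;> assumption
    rcases Sym2.eq_iff.1 hab with ⟨rfl, rfl⟩ | ⟨rfl, rfl⟩
    · exact key
    · exact key.symm
  have hdisj : ∀ W W', (∀ v, v ∈ W → v ∈ W' → False) → ∀ z, z ∈ X W → z ∈ X W' → False := by
    intro W W' hW z hz hz'
    rcases hz with ⟨v, hv, rfl⟩ | ⟨e, t, he, rfl⟩
    · rcases hz' with ⟨v', hv', h⟩ | ⟨e', t', he', h⟩
      · rw [hf h] at hv'
        exact hW v hv hv'
      · exact hW v hv (he' v (hvert _ _ _ h))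
    · rcases hz' with ⟨v', hv', h⟩ | ⟨e', t', he', h⟩
      · exact hW v' (he v' (hvert _ _ _ h.symm)) hv'
      · by_cases hee : e = e'
        · subst hee
          obtain ⟨a, b, hab, -, -⟩ := hends e
          have ha : a ∈ (e : Sym2 V) := by rw [hab]; simp
          exact hW a (he a ha) (he' a ha)
        · obtain ⟨v, hv⟩ := hcross e e' hee t t' h.symm
          exact hW v (he v (hvert _ _ _ hv.symm)) (he' v (hvert _ _ _ (h.trans hv.symm)))
  let W : Fin 5 → Fin 5 → Set V := fun i j => {v | c v = some i ∨ c v = some j}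
  have hr : ∀ i, ∃ r, c r = some i := by
    intro i
    obtain ⟨j, hj⟩ : ∃ j : Fin 5, i ≠ j := by revert i; decide
    obtain ⟨x, -, hx, -⟩ := h2 i j hj
    exact ⟨x, hx⟩
  choose r hr using hr
  have hin : ∀ (S : Set V) (i : Fin 5) x y, (∀ v, c v = some i → v ∈ S) → c x = some i →
      c y = some i → JoinedIn (X S) (f x) (f y) := by
    intro S i x y hS hx hy
    have := h1 i x y hx hy
    clear hy
    induction this with
    | refl => exact JoinedIn.refl (Or.inl ⟨x, hS x hx, rfl⟩)
    | tail _ hst ih => exact ih.trans (hedge S _ _ (hS _ hst.2.1) (hS _ hst.2.2) hst.1)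
  have hpath : ∀ i j, i < j → JoinedIn (X (W i j)) (f (r i)) (f (r j)) := by
    intro i j hij
    obtain ⟨x, y, hx, hy, hxy⟩ := h2 i j hij.ne
    exact ((hin (W i j) i _ _ (fun v hv => Or.inl hv) (hr i) hx).trans
      (hedge _ x y (Or.inl hx) (Or.inr hy) hxy)).trans
      (hin (W i j) j _ _ (fun v hv => Or.inr hv) hy (hr j))
  have hpath' : ∀ i j, ∃ q : unitInterval → ℝ × ℝ, i < j →
      Continuous q ∧ q 0 = f (r i) ∧ q 1 = f (r j) ∧ ∀ t, q t ∈ X (W i j) := by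
    intro i j
    by_cases hij : i < j
    · obtain ⟨q, hq⟩ := hpath i j hij
      exact ⟨q, fun _ => ⟨q.continuous, q.source, q.target, hq⟩⟩
    · exact ⟨fun _ => 0, fun h => absurd h hij⟩
  choose q hq using hpath'
  refine no_K5 (fun i => Complex.equivRealProdCLM.symm (f (r i)))
    (fun i j t => Complex.equivRealProdCLM.symm (q i j t)) ?_ ?_ ?_ ?_
  · intro i j hij
    exact Complex.equivRealProdCLM.symm.continuous.comp (hq i j hij).1
  · intro i j hij
    simp only [(hq i j hij).2.1]
  · intro i j hij
    simp only [(hq i j hij).2.2.1]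
  · intro i j k l hij hkl hik hil hjk hjl s t h
    have h' := Complex.equivRealProdCLM.symm.injective h
    refine hdisj (W i j) (W k l) ?_ _ ((hq i j hij).2.2.2 s) (h' ▸ (hq k l hkl).2.2.2 t)
    intro v hv hv'
    rcases hv with hv | hv <;> rcases hv' with hv' | hv' <;> rw [hv] at hv' <;>
      have := Option.some.inj hv' <;> contradiction

/-- orientation determinant -/
def dt {R : Type*} [Ring R] (a b c : R × R) : R :=
  (b.1 - a.1) * (c.2 - a.2) - (b.2 - a.2) * (c.1 - a.1)

theorem straight {V : Type*} (G : SimpleGraph V) (P : V → ℤ × ℤ) (hinj : Function.Injective P)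
    (hv : ∀ u v w, G.Adj u v → w ≠ u → w ≠ v → dt (P u) (P v) (P w) ≠ 0)
    (he : ∀ a b c d, G.Adj a b → G.Adj c d → a ≠ c → a ≠ d → b ≠ c → b ≠ d →
      0 < dt (P a) (P b) (P c) * dt (P a) (P b) (P d) ∨
      0 < dt (P c) (P d) (P a) * dt (P c) (P d) (P b)) : IsPlanar G := by
  let f : V → ℝ × ℝ := fun v => (((P v).1 : ℝ), ((P v).2 : ℝ))
  have hfinj : Function.Injective f := by
    intro x y h
    apply hinj
    have h' := Prod.ext_iff.1 h
    exact Prod.ext (Int.cast_injective (α := ℝ) h'.1) (Int.cast_injective (α := ℝ) h'.2)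
  have hcast : ∀ a b c, dt (f a) (f b) (f c) = ((dt (P a) (P b) (P c) : ℤ) : ℝ) := by
    intro a b c; simp [dt, f]
  have hv' : ∀ u v w, G.Adj u v → w ≠ u → w ≠ v → dt (f u) (f v) (f w) ≠ 0 := by
    intro u v w h1 h2 h3
    rw [hcast]
    exact_mod_cast hv u v w h1 h2 h3
  have he' : ∀ a b c d, G.Adj a b → G.Adj c d → a ≠ c → a ≠ d → b ≠ c → b ≠ d →
      0 < dt (f a) (f b) (f c) * dt (f a) (f b) (f d) ∨
      0 < dt (f c) (f d) (f a) * dt (f c) (f d) (f b) := by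
    intro a b c d h1 h2 h3 h4 h5 h6
    simp only [hcast]
    exact_mod_cast he a b c d h1 h2 h3 h4 h5 h6
  let pt : ℝ × ℝ → ℝ × ℝ → ℝ → ℝ × ℝ := fun a b t =>
    ((1 - t) * a.1 + t * b.1, (1 - t) * a.2 + t * b.2)
  have dself : ∀ a b t, dt a b (pt a b t) = 0 := by
    intro a b t; simp only [dt, pt]; ring
  have dcomb : ∀ a b c d t, dt a b (pt c d t) = (1 - t) * dt a b c + t * dt a b d := by
    intro a b c d t; simp only [dt, pt]; ring
  have d0 : ∀ a b : ℝ × ℝ, dt a b a = 0 := by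
    intro a b; simp only [dt]; ring
  have d1 : ∀ a b : ℝ × ℝ, dt a b b = 0 := by
    intro a b; simp only [dt]; ring
  have ptinj : ∀ u v, u ≠ v → ∀ s t, pt (f u) (f v) s = pt (f u) (f v) t → s = t := by
    intro u v huv s t h
    have h1 := congrArg Prod.fst h
    have h2 := congrArg Prod.snd h
    simp only [pt] at h1 h2
    by_contra hst
    have hst' : s - t ≠ 0 := sub_ne_zero.2 hst
    apply huv
    apply hfinj
    refine Prod.ext ?_ ?_
    · exact mul_left_cancel₀ hst' (by linear_combination -h1)
    · exact mul_left_cancel₀ hst' (by linear_combination -h2)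
  have pt0 : ∀ a b, pt a b 0 = a := by intro a b; simp [pt]
  have pt1 : ∀ a b, pt a b 1 = b := by intro a b; simp [pt]
  have ptsymm : ∀ a b t, pt a b t = pt b a (1 - t) := by
    intro a b t; simp only [pt]; refine Prod.ext ?_ ?_ <;> simp only <;> ring
  -- crossing at common endpoint
  have share : ∀ a b d, G.Adj a b → b ≠ d → a ≠ d → ∀ s t, pt (f a) (f b) s = pt (f a) (f d) t →
      pt (f a) (f b) s ∈ Set.range f := by
    intro a b d hab hbd had s t h
    have h1 := dself (f a) (f b) s
    rw [h, dcomb, d0, mul_zero, zero_add] at h1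
    rcases mul_eq_zero.1 h1 with h2 | h2
    · rw [h, h2, pt0]; exact ⟨a, rfl⟩
    · exact absurd h2 (hv' a b d hab had.symm hbd.symm)
  have sep : ∀ A B C D : ℝ × ℝ, 0 < dt A B C * dt A B D → ∀ s t : ℝ, 0 ≤ t → t ≤ 1 →
      pt A B s = pt C D t → False := by
    intro A B C D hpos s t ht0 ht1 h
    have h1 := dself A B s
    rw [h, dcomb] at h1
    rcases pos_and_pos_or_neg_and_neg_of_mul_pos hpos with ⟨p, q⟩ | ⟨p, q⟩
    · rcases ht0.eq_or_lt with h0 | h0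
      · subst h0; linarith
      · nlinarith [mul_pos h0 q, mul_nonneg (sub_nonneg.2 ht1) p.le]
    · rcases ht0.eq_or_lt with h0 | h0
      · subst h0; linarith
      · nlinarith [mul_neg_of_pos_of_neg h0 q, mul_nonneg (sub_nonneg.2 ht1) (neg_nonneg.2 p.le)]
  let U : G.edgeSet → V := fun e => (Quot.out (e : Sym2 V)).1
  let T : G.edgeSet → V := fun e => (Quot.out (e : Sym2 V)).2
  have hUT : ∀ e : G.edgeSet, (e : Sym2 V) = s(U e, T e) := fun e => (Quot.out_eq _).symm
  have hadj : ∀ e : G.edgeSet, G.Adj (U e) (T e) := by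
    intro e
    have := e.2
    rw [hUT e] at this
    exact this
  refine ⟨f, fun e t => pt (f (U e)) (f (T e)) t, hfinj, ?_, ?_, ?_, ?_, ?_⟩
  · intro e
    simp only [pt]
    fun_prop
  · intro e
    exact ⟨U e, T e, hUT e, pt0 _ _, pt1 _ _⟩
  · intro e s t h
    exact Subtype.ext (ptinj _ _ (hadj e).ne _ _ h)
  · intro e t t0 t1 v h
    by_cases h1 : v = U e
    · subst h1
      exact t0 (ptinj _ _ (hadj e).ne _ _ (h.trans (pt0 _ _).symm))
    by_cases h2 : v = T e
    · subst h2
      exact t1 (ptinj _ _ (hadj e).ne _ _ (h.trans (pt1 _ _).symm))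
    · have := dself (f (U e)) (f (T e)) t
      rw [show pt (f (U e)) (f (T e)) t = f v from h] at this
      exact hv' _ _ _ (hadj e) h1 h2 this
  · intro e e' hee s t h
    simp only at h ⊢
    have hne : s(U e, T e) ≠ s(U e', T e') := by
      rw [← hUT, ← hUT]
      exact fun h => hee (Subtype.ext h)
    have ha := hadj e
    have ha' := hadj e'
    generalize U e = a at *
    generalize T e = b at *
    generalize U e' = c at *
    generalize T e' = d at *
    by_cases hac : a = c
    · subst hac
      exact share a b d ha (by rintro rfl; exact hne rfl) ha'.ne s t h
    by_cases had : a = d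
    · subst had
      rw [ptsymm (f c)] at h
      exact share a b c ha (by rintro rfl; exact hne Sym2.eq_swap) hac s _ h
    by_cases hbc : b = c
    · subst hbc
      rw [ptsymm (f a)] at h ⊢
      exact share b a d ha.symm had ha'.ne _ t h
    by_cases hbd : b = d
    · subst hbd
      rw [ptsymm (f a), ptsymm (f c)] at h
      rw [ptsymm (f a)]
      exact share b a c ha.symm hac hbc _ _ h
    rcases he' a b c d ha ha' hac had hbc hbd with hp | hp
    · exact (sep _ _ _ _ hp s t t.2.1 t.2.2 h).elim
    · exact (sep _ _ _ _ hp t s s.2.1 s.2.2 h.symm).elim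

end Plan

section Fin

abbrev VV : Type := Σ i : Fin 3, (![Fin 1, Fin 10, Fin 10] : Fin 3 → Type) i

def idx : VV → ℕ
  | ⟨0, _⟩ => 0
  | ⟨1, k⟩ => 1 + (show Fin 10 from k).val
  | ⟨2, k⟩ => 11 + (show Fin 10 from k).val

def prt (n : ℕ) : ℕ := if n = 0 then 0 else if n ≤ 10 then 1 else 2

theorem idx_lt : ∀ x, idx x < 21
  | ⟨0, _⟩ => by simp [idx]
  | ⟨1, k⟩ => by have := (show Fin 10 from k).isLt; simp only [idx]; omega
  | ⟨2, k⟩ => by have := (show Fin 10 from k).isLt; simp only [idx]; omega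

theorem prt_one : ∀ k : Fin 10, prt (1 + k.val) = 1 := by decide

theorem prt_two : ∀ k : Fin 10, prt (11 + k.val) = 2 := by decide

theorem prt_idx : ∀ x, prt (idx x) = x.1.val
  | ⟨0, _⟩ => rfl
  | ⟨1, k⟩ => prt_one k
  | ⟨2, k⟩ => prt_two k

theorem idx_inj : Function.Injective idx := by
  intro x y h
  have h1 : x.1 = y.1 := by
    apply Fin.ext
    rw [← prt_idx, ← prt_idx, h]
  obtain ⟨i, a⟩ := x
  obtain ⟨j, b⟩ := y
  simp only at h1
  subst h1
  congr 1
  match i, a, b, h with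
  | 0, a, b, h => exact Subsingleton.elim (α := Fin 1) a b
  | 1, a, b, h =>
    simp only [idx] at h
    exact Fin.ext (n := 10) (by omega)
  | 2, a, b, h =>
    simp only [idx] at h
    exact Fin.ext (n := 10) (by omega)

theorem idx_surj (n : ℕ) (hn : n < 21) : ∃ x, idx x = n := by
  by_cases h0 : n = 0
  · exact ⟨⟨0, (0 : Fin 1)⟩, h0.symm⟩
  by_cases h1 : n ≤ 10
  · exact ⟨⟨1, (⟨n - 1, by omega⟩ : Fin 10)⟩, show 1 + (n - 1) = n by omega⟩
  · exact ⟨⟨2, (⟨n - 11, by omega⟩ : Fin 10)⟩, show 11 + (n - 11) = n by omega⟩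

abbrev KK : SimpleGraph VV := completeMultipartiteGraph ![Fin 1, Fin 10, Fin 10]

theorem KK_adj (x y : VV) : KK.Adj x y ↔ prt (idx x) ≠ prt (idx y) := by
  rw [prt_idx, prt_idx]
  change x.1 ≠ y.1 ↔ _
  rw [Ne, Ne, Fin.ext_iff]

def K21 : SimpleGraph (Fin 21) where
  Adj x y := prt x ≠ prt y
  symm := ⟨fun _ _ h => h.symm⟩
  loopless := ⟨fun _ h => h rfl⟩

instance : DecidableRel K21.Adj := fun x y => inferInstanceAs (Decidable (prt x ≠ prt y))

theorem K21_card : K21.edgeFinset.card = 120 := by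
  have h := K21.sum_degrees_eq_twice_card_edges
  have h2 : ∑ v, K21.degree v = 240 := by decide +kernel
  omega

noncomputable def eqv : VV ≃ Fin 21 := Equiv.ofBijective (fun x => ⟨idx x, idx_lt x⟩)
  ⟨fun _ _ h => idx_inj (Fin.ext_iff.1 h), fun n => by
    obtain ⟨x, hx⟩ := idx_surj n n.2
    exact ⟨x, Fin.ext hx⟩⟩

noncomputable def isoK : KK ≃g K21 := ⟨eqv, by
  intro x y
  rw [KK_adj]
  rfl⟩

noncomputable instance : Fintype VV := Fintype.ofEquiv _ eqv.symm

open scoped Classical in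
theorem KK_card : KK.edgeFinset.card = 120 := by
  rw [← K21_card]
  convert Iso.card_edgeFinset_eq isoK

open scoped Classical in
theorem planar_card (H : SimpleGraph VV) (hH : IsPlanar H) : H.edgeFinset.card ≤ 59 := by
  by_contra hcon
  refine planar_no_K5 hH (mader 21 H Finset.univ ?_ (by norm_num) (by simp) (by omega))
  rw [Finset.card_univ, Fintype.card_congr eqv, Fintype.card_fin]

theorem lower (n : ℕ) (H : Fin n → SimpleGraph VV) (hP : ∀ i, IsPlanar (H i))
    (hU : (⨆ i, H i) = KK) : 3 ≤ n := by
  classical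
  have hsub : KK.edgeFinset ⊆ Finset.univ.biUnion (fun i => (H i).edgeFinset) := by
    intro e he
    induction e using Sym2.ind with
    | _ x y =>
    rw [mem_edgeFinset, mem_edgeSet, ← hU, iSup_adj] at he
    obtain ⟨i, hi⟩ := he
    exact Finset.mem_biUnion.2 ⟨i, Finset.mem_univ _, mem_edgeFinset.2 hi⟩
  have h1 := Finset.card_le_card hsub
  have h2 := Finset.card_biUnion_le_card_mul Finset.univ (fun i => (H i).edgeFinset) 59
    (fun i _ => planar_card (H i) (hP i))
  rw [KK_card] at h1
  rw [Finset.card_univ, Fintype.card_fin] at h2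
  omega

/-- graph on `VV` from a list of index pairs -/
def gr (L : List (ℕ × ℕ)) : SimpleGraph VV where
  Adj x y := x ≠ y ∧ (idx x, idx y) ∈ L ++ L.map Prod.swap
  symm := ⟨by
    rintro x y ⟨h1, h2⟩
    refine ⟨h1.symm, ?_⟩
    rw [List.mem_append, List.mem_map] at h2 ⊢
    rcases h2 with h | ⟨⟨a, b⟩, h, h'⟩
    · exact Or.inr ⟨_, h, rfl⟩
    · obtain ⟨rfl, rfl⟩ := Prod.mk.inj h'
      exact Or.inl h⟩
  loopless := ⟨fun _ h => h.1 rfl⟩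

def look (P : List (ℤ × ℤ)) (n : ℕ) : ℤ × ℤ := P.getD n 0

def chk1 (P : List (ℤ × ℤ)) : Bool :=
  (List.range 21).all fun m => (List.range 21).all fun n => m == n || look P m != look P n

def chk2 (L : List (ℕ × ℕ)) (P : List (ℤ × ℤ)) : Bool :=
  L.all fun e => (List.range 21).all fun w => w == e.1 || (w == e.2 ||
    dt (look P e.1) (look P e.2) (look P w) != 0)

def chk3 (L : List (ℕ × ℕ)) (P : List (ℤ × ℤ)) : Bool :=
  L.all fun e => L.all fun g => e.1 == g.1 || (e.1 == g.2 || (e.2 == g.1 || (e.2 == g.2 ||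
    (decide (0 < dt (look P e.1) (look P e.2) (look P g.1) *
        dt (look P e.1) (look P e.2) (look P g.2)) ||
     decide (0 < dt (look P g.1) (look P g.2) (look P e.1) *
        dt (look P g.1) (look P g.2) (look P e.2))))))

theorem gr_planar (L : List (ℕ × ℕ)) (P : List (ℤ × ℤ)) (h1 : chk1 P = true)
    (h2 : chk2 (L ++ L.map Prod.swap) P = true) (h3 : chk3 (L ++ L.map Prod.swap) P = true) :
    IsPlanar (gr L) := by
  have ne : ∀ x y : VV, x ≠ y → idx x ≠ idx y := fun x y h h' => h (idx_inj h')
  refine straight _ (fun x => look P (idx x)) ?_ ?_ ?_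
  · intro x y h
    by_contra hxy
    rw [chk1, List.all_eq_true] at h1
    have := List.all_eq_true.1 (h1 _ (List.mem_range.2 (idx_lt x))) _ (List.mem_range.2 (idx_lt y))
    simp only at h
    simp [ne _ _ hxy, h] at this
  · intro u v w huv hwu hwv
    rw [chk2, List.all_eq_true] at h2
    have := List.all_eq_true.1 (h2 _ huv.2) _ (List.mem_range.2 (idx_lt w))
    simpa [ne _ _ hwu, ne _ _ hwv] using this
  · intro a b c d hab hcd hac had hbc hbd
    rw [chk3, List.all_eq_true] at h3
    have := List.all_eq_true.1 (h3 _ hab.2) _ hcd.2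
    simpa only [ne _ _ hac, ne _ _ had, ne _ _ hbc, ne _ _ hbd, beq_eq_false_iff_ne.2, Ne,
      not_false_eq_true, Bool.false_or, Bool.or_eq_true, decide_eq_true_eq] using this

theorem gr_le (L : List (ℕ × ℕ))
    (h : (L ++ L.map Prod.swap).all (fun e => prt e.1 != prt e.2) = true) : gr L ≤ KK := by
  intro x y hxy
  rw [KK_adj]
  have := List.all_eq_true.1 h _ hxy.2
  simpa using this

def Eg0 : List (ℕ × ℕ) := [(0, 1), (0, 3), (0, 7), (0, 13), (0, 18), (0, 19), (1, 11), (1, 13),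
    (1, 17), (1, 18), (1, 19), (2, 17), (2, 19), (3, 13), (3, 17), (3, 19), (4, 11), (4, 18),
    (5, 12), (5, 13), (5, 14), (5, 16), (5, 18), (5, 20), (6, 12), (6, 14), (7, 12), (7, 13),
    (7, 14), (7, 16), (7, 18), (7, 20), (8, 14), (8, 16), (9, 11), (9, 15), (9, 18), (10, 11),
    (10, 13), (10, 18)]

def Pg0 : List (ℤ × ℤ) := [(49, 9), (5, 4), (21, 9), (22, 13), (47, 27), (7, 63), (17, 34), (43,
    21), (14, 44), (58, 16), (4, 71), (70, 5), (10, 28), (8, 20), (10, 42), (51, 22), (11, 50),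
    (16, 8), (59, 8), (26, 7), (12, 55)]

def Eg1 : List (ℕ × ℕ) := [(0, 2), (0, 4), (0, 5), (0, 6), (0, 8), (0, 11), (0, 12), (0, 15),
    (0, 16), (0, 17), (0, 20), (1, 12), (1, 16), (2, 11), (2, 12), (2, 14), (2, 18), (2, 20),
    (3, 11), (3, 12), (3, 14), (3, 16), (3, 18), (4, 12), (4, 13), (4, 15), (4, 16), (4, 17),
    (4, 19), (5, 15), (5, 17), (6, 15), (7, 15), (7, 17), (8, 12), (8, 20), (9, 13), (9, 16),
    (9, 17), (9, 19), (10, 16), (10, 19)]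

def Pg1 : List (ℤ × ℤ) := [(8, 8), (60, 34), (3, 3), (58, 40), (75, 10), (17, 18), (19, 13),
    (37, 20), (44, 4), (30, 35), (29, 53), (6, 87), (94, 3), (45, 33), (3, 94), (50, 10), (13,
    77), (19, 33), (4, 91), (41, 40), (7, 4)]

def Eg2 : List (ℕ × ℕ) := [(0, 9), (0, 10), (0, 14), (1, 14), (1, 15), (1, 20), (2, 13), (2,
    15), (2, 16), (3, 15), (3, 20), (4, 14), (4, 20), (5, 11), (5, 19), (6, 11), (6, 13), (6,
    16), (6, 17), (6, 18), (6, 19), (6, 20), (7, 11), (7, 19), (8, 11), (8, 13), (8, 15), (8,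
    17), (8, 18), (8, 19), (9, 12), (9, 14), (9, 20), (10, 12), (10, 14), (10, 15), (10, 17),
    (10, 20)]

def Pg2 : List (ℤ × ℤ) := [(31, 21), (15, 40), (4, 10), (21, 37), (20, 35), (18, 11), (32, 4),
    (14, 14), (7, 26), (23, 31), (9, 31), (15, 20), (36, 18), (7, 6), (19, 29), (4, 52), (5, 5),
    (44, 4), (9, 8), (11, 10), (53, 3)]

theorem cover_aux : ((List.range 21).all fun m => (List.range 21).all fun n =>
    prt m == prt n || (decide ((m, n) ∈ Eg0 ++ Eg0.map Prod.swap) ||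
    (decide ((m, n) ∈ Eg1 ++ Eg1.map Prod.swap) ||
    decide ((m, n) ∈ Eg2 ++ Eg2.map Prod.swap)))) = true := by
  decide +kernel

theorem cover (m : ℕ) (hm : m < 21) (n : ℕ) (hn : n < 21) (h : prt m ≠ prt n) :
    (m, n) ∈ Eg0 ++ Eg0.map Prod.swap ∨ (m, n) ∈ Eg1 ++ Eg1.map Prod.swap ∨
    (m, n) ∈ Eg2 ++ Eg2.map Prod.swap := by
  have := List.all_eq_true.1 (List.all_eq_true.1 cover_aux _ (List.mem_range.2 hm)) _
    (List.mem_range.2 hn)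
  simpa only [beq_eq_false_iff_ne.2 h, Bool.false_or, Bool.or_eq_true, decide_eq_true_eq] using this

theorem upper : ∃ H : Fin 3 → SimpleGraph VV,
    (∀ i, H i ≤ KK) ∧ (∀ i, IsPlanar (H i)) ∧ (⨆ i, H i) = KK := by
  have hle : ∀ i : Fin 3, (![gr Eg0, gr Eg1, gr Eg2] : Fin 3 → SimpleGraph VV) i ≤ KK := by
    intro i
    fin_cases i
    · exact gr_le Eg0 (by decide +kernel)
    · exact gr_le Eg1 (by decide +kernel)
    · exact gr_le Eg2 (by decide +kernel)
  refine ⟨![gr Eg0, gr Eg1, gr Eg2], hle, ?_, ?_⟩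
  · intro i
    fin_cases i
    · exact gr_planar Eg0 Pg0 (by decide +kernel) (by decide +kernel) (by decide +kernel)
    · exact gr_planar Eg1 Pg1 (by decide +kernel) (by decide +kernel) (by decide +kernel)
    · exact gr_planar Eg2 Pg2 (by decide +kernel) (by decide +kernel) (by decide +kernel)
  · apply le_antisymm (iSup_le hle)
    intro x y hxy
    rw [iSup_adj]
    have := cover _ (idx_lt x) _ (idx_lt y) ((KK_adj x y).1 hxy)
    rcases this with h | h | h
    · exact ⟨0, hxy.ne, h⟩
    · exact ⟨1, hxy.ne, h⟩
    · exact ⟨2, hxy.ne, h⟩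

end Fin

theorem thickness_K1_10_10 :
    thickness (completeMultipartiteGraph ![Fin 1, Fin 10, Fin 10]) = 3 := by
  apply le_antisymm
  · exact Nat.sInf_le upper
  · refine le_csInf ⟨3, upper⟩ ?_
    rintro n ⟨H, -, hP, hU⟩
    exact lower n H hP hU
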